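/- arXiv:1303.1960 — 2 statements merged into one kernel-verified Lean document; each statement's English description precedes it below -/
import Mathlib

section
/- Let A be an m×n real matrix with all entries nonnegative whose (classical) rank equals 3. Then the nonnegative rank of A is at most ⌈6·min{m,n}/7⌉; that is, there exist an m×⌈6·min{m,n}/7⌉ matrix B and a ⌈6·min{m,n}/7⌉×n matrix C, both with all entries nonnegative, such that A = B·C. -/
/-!
Split the rows into groups of seven; it suffices that any seven rows are nonnegative combinations
of six nonnegative vectors. A rank-three factorization `P * W` represents the rows by points of
three-space. If one row lies in the cone spanned by the others, those six already suffice.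
Otherwise the points, cyclically ordered, are the vertices of a convex heptagon. Around a pivot
vertex `0`, the linear relations among the vertices `0, 1, 2, 3` and `0, 4, 5, 6` become, after
scaling, `A 0 + A 2 = A 1 + A 3` and `A 0 + A 5 = A 4 + A 6`, and these yield six generators as soon
as `A 0 ≤ A 1 + A 4` and `A 0 ≤ A 3 + A 6`. Each inequality can fail only if the pivot satisfies a
strict inequality between products of brackets, an obstruction on the left or on the right. An
obstruction on the left at `s` excludes one on the right at `s + 4`. Hence, if every vertex were
obstructed, all of them would be obstructed on the same side, because `4` generates `ℤ/7`; the
Plücker relations exclude this already for three consecutive vertices.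
-/

open Set Matrix

section NonnegativeRank

variable {R m n : Type*} [CommSemiring R] [PartialOrder R]

/-- `NonnegRankLE A k` says that the nonnegative rank of `A` is at most `k`. The inner dimension is
exactly `k`, which is no restriction because a factorization can be padded with zeros. -/
def NonnegRankLE (A : Matrix m n R) (k : ℕ) : Prop :=
  ∃ (B : Matrix m (Fin k) R) (C : Matrix (Fin k) n R),
    (∀ i t, 0 ≤ B i t) ∧ (∀ t j, 0 ≤ C t j) ∧ A = B * C

namespace NonnegRankLE

theorem transpose {A : Matrix m n R} {k : ℕ} (h : NonnegRankLE A k) : NonnegRankLE Aᵀ k := by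
  obtain ⟨B, C, hB, hC, rfl⟩ := h
  exact ⟨Cᵀ, Bᵀ, fun j t => hC t j, fun t i => hB i t, transpose_mul B C⟩

theorem of_submatrix {ι : Type*} {A : Matrix m n R} {k : ℕ} {f : ι → m}
    (hf : Function.Surjective f) (h : NonnegRankLE (A.submatrix f id) k) : NonnegRankLE A k := by
  obtain ⟨B, C, hB, hC, hA⟩ := h
  choose g hg using hf
  refine ⟨B.submatrix g id, C, fun i => hB (g i), hC, ?_⟩
  ext i j
  calc
    A i j = A (f (g i)) j := by rw [hg]
    _ = (B.submatrix g id * C) i j := congrFun₂ hA (g i) j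

variable [IsOrderedRing R]

theorem of_forall_mem_hull {ι : Type*} [Fintype ι] {A : Matrix m n R} (C : ι → n → R)
    (hC : ∀ t, 0 ≤ C t) (hA : ∀ i, A i ∈ PointedCone.hull R (range C)) :
    NonnegRankLE A (Fintype.card ι) := by
  choose c hc using fun i => (Submodule.mem_span_range_iff_exists_fun _).1 (hA i)
  let e := (Fintype.equivFin ι).symm
  refine ⟨of fun i t => c i (e t), of fun t => C (e t), fun i t => (c i (e t)).2,
    fun t => hC (e t), ?_⟩
  ext i j
  rw [← hc i, Finset.sum_apply, mul_apply, ← e.sum_comp]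
  rfl

theorem exists_forall_mem_hull {A : Matrix m n R} {k : ℕ} (h : NonnegRankLE A k) :
    ∃ C : Fin k → n → R, (∀ t, 0 ≤ C t) ∧ ∀ i, A i ∈ PointedCone.hull R (range C) := by
  obtain ⟨B, C, hB, hC, rfl⟩ := h
  refine ⟨C, hC, fun i => (Submodule.mem_span_range_iff_exists_fun _).2
    ⟨fun t => ⟨B i t, hB i t⟩, ?_⟩⟩
  ext j
  rw [Finset.sum_apply, mul_apply]
  rfl

theorem card_rows [Fintype m] {A : Matrix m n R} (hA : ∀ i j, 0 ≤ A i j) :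
    NonnegRankLE A (Fintype.card m) :=
  of_forall_mem_hull A hA fun i => PointedCone.subset_hull (mem_range_self i)

theorem add_of_cover {m₁ m₂ : Type*} {A : Matrix m n R} {k₁ k₂ : ℕ} {f₁ : m₁ → m} {f₂ : m₂ → m}
    (hf : ∀ i, i ∈ range f₁ ∨ i ∈ range f₂) (h₁ : NonnegRankLE (A.submatrix f₁ id) k₁)
    (h₂ : NonnegRankLE (A.submatrix f₂ id) k₂) : NonnegRankLE A (k₁ + k₂) := by
  obtain ⟨C₁, hC₁, hA₁⟩ := h₁.exists_forall_mem_hull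
  obtain ⟨C₂, hC₂, hA₂⟩ := h₂.exists_forall_mem_hull
  have hA (i : m) : A i ∈ PointedCone.hull R (range (Sum.elim C₁ C₂)) := by
    rw [Sum.elim_range]
    rcases hf i with ⟨t, rfl⟩ | ⟨t, rfl⟩
    · exact Submodule.span_mono subset_union_left (hA₁ t)
    · exact Submodule.span_mono subset_union_right (hA₂ t)
  simpa only [Fintype.card_sum, Fintype.card_fin] using
    of_forall_mem_hull (Sum.elim C₁ C₂) (Sum.rec hC₁ hC₂) hA

theorem mono {A : Matrix m n R} {k l : ℕ} (h : NonnegRankLE A k) (hkl : k ≤ l) :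
    NonnegRankLE A l := by
  have hempty : NonnegRankLE (A.submatrix (Fin.elim0 : Fin 0 → m) id) (l - k) :=
    ⟨0, 0, fun _ _ => le_rfl, fun _ _ => le_rfl, Subsingleton.elim _ _⟩
  simpa only [Nat.add_sub_cancel' hkl] using
    add_of_cover (f₁ := id) (fun i => .inl (mem_range_self i)) h hempty

theorem of_forall_fin_submatrix [Fintype m] {A : Matrix m n R} {a k : ℕ} (hA : ∀ i j, 0 ≤ A i j)
    (h : ∀ f : Fin (a + 1) → m, NonnegRankLE (A.submatrix f id) a)
    (hk : a * Fintype.card m ≤ (a + 1) * k) : NonnegRankLE A k := by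
  classical
  induction hm : Fintype.card m using Nat.strong_induction_on generalizing m k with
  | _ c ih =>
    rw [hm] at hk
    rcases lt_or_ge c (a + 1) with hc | hc
    · exact (card_rows hA).mono (by nlinarith)
    · obtain ⟨f⟩ := Function.Embedding.nonempty_of_card_le
        ((Fintype.card_fin (a + 1)).trans_le (hc.trans_eq hm.symm))
      obtain ⟨d, rfl⟩ := Nat.exists_eq_add_of_le' hc
      obtain ⟨l, rfl⟩ := Nat.exists_eq_add_of_le' (show a ≤ k by nlinarith)
      have hcard : Fintype.card ↥(range f)ᶜ = d := by
        rw [Fintype.card_compl_set, card_range_of_injective f.injective, Fintype.card_fin, hm,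
          Nat.add_sub_cancel]
      have hrest : NonnegRankLE (A.submatrix (Subtype.val : ↥(range f)ᶜ → m) id) l :=
        ih d (by lia) (fun i => hA i) (fun g => h (Subtype.val ∘ g))
          (by rw [hcard]; nlinarith) hcard
      refine add_of_cover (fun i => ?_) hrest (h f)
      rw [Subtype.range_coe, mem_compl_iff]
      exact (em (i ∈ range f)).symm

end NonnegRankLE

end NonnegativeRank

section Bracket

variable {R ι n : Type*} [CommRing R]

/-- The bracket `[i j k]`: the `3 × 3` minor of the rows `i`, `j`, `k` of `P`. It is the orientation
of these three points when the rows are homogeneous coordinates in the plane. -/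
def bracket (P : Matrix ι (Fin 3) R) (i j k : ι) : R :=
  (of ![P i, P j, P k]).det

theorem bracket_eq (P : Matrix ι (Fin 3) R) (i j k : ι) :
    bracket P i j k = P i 0 * (P j 1 * P k 2 - P j 2 * P k 1) -
      P i 1 * (P j 0 * P k 2 - P j 2 * P k 0) + P i 2 * (P j 0 * P k 1 - P j 1 * P k 0) := by
  rw [bracket, det_fin_three]
  simp only [of_apply, cons_val]
  ring

theorem bracket_rotate (P : Matrix ι (Fin 3) R) (i j k : ι) :
    bracket P j k i = bracket P i j k := by
  simp only [bracket_eq]; ring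

theorem bracket_swap (P : Matrix ι (Fin 3) R) (i j k : ι) :
    bracket P i k j = -bracket P i j k := by
  simp only [bracket_eq]; ring

theorem bracket_self_right (P : Matrix ι (Fin 3) R) (i j : ι) : bracket P i j j = 0 := by
  simp only [bracket_eq]; ring

theorem bracket_plucker_second (P : Matrix ι (Fin 3) R) (a b c d e : ι) :
    bracket P a b d * bracket P b c e =
      bracket P a b c * bracket P b d e + bracket P a b e * bracket P b c d := by
  simp only [bracket_eq]; ring

theorem bracket_plucker_third (P : Matrix ι (Fin 3) R) (a b c d e : ι) :
    bracket P a c d * bracket P b c e =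
      bracket P a b c * bracket P c d e + bracket P a c e * bracket P b c d := by
  simp only [bracket_eq]; ring

theorem bracket_plucker_fourth (P : Matrix ι (Fin 3) R) (a b c d e : ι) :
    bracket P a c d * bracket P b d e =
      bracket P a b d * bracket P c d e + bracket P a d e * bracket P b c d := by
  simp only [bracket_eq]; ring

theorem bracket_mul_row_relation (P : Matrix ι (Fin 3) R) (W : Matrix (Fin 3) n R) (a b c d : ι)
    (j : n) :
    bracket P b c d * (P * W) a j + bracket P a b d * (P * W) c j =
      bracket P a c d * (P * W) b j + bracket P a b c * (P * W) d j := by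
  simp only [bracket_eq, mul_apply, Fin.sum_univ_three]; ring

theorem bracket_vecMul_submatrix (P : Matrix ι (Fin 3) R) (W : Matrix (Fin 3) n R)
    (a b c d : ι) :
    ![bracket P b c d, -bracket P a c d, bracket P a b d, -bracket P a b c] ᵥ*
      (P * W).submatrix ![a, b, c, d] id = 0 := by
  ext j
  simp only [vecMul, dotProduct, Fin.sum_univ_four, submatrix_apply, id_eq, cons_val,
    Pi.zero_apply]
  linear_combination bracket_mul_row_relation P W a b c d j

end Bracket

section PositiveConfiguration

/-- The rows of `P` relabelled so that row `s` becomes row `0`. -/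
def rotateRows {R ι κ : Type*} [Add ι] (P : Matrix ι κ R) (s : ι) : Matrix ι κ R :=
  of fun i => P (i + s)

/-- The rows of `P` in the opposite order. They are negated so that, for rows in three-space, the
change of orientation is undone. -/
def reverseRows {R κ : Type*} [Neg R] {N : ℕ} (P : Matrix (Fin N) κ R) : Matrix (Fin N) κ R :=
  of fun i => -P i.rev

theorem rotateRows_rotateRows {R ι κ : Type*} [AddSemigroup ι] (P : Matrix ι κ R) (s t : ι) :
    rotateRows (rotateRows P s) t = rotateRows P (t + s) :=
  funext fun i => congrArg P (add_assoc i t s)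

variable {R : Type*} [CommRing R]

theorem bracket_reverseRows {N : ℕ} (P : Matrix (Fin N) (Fin 3) R) (i j k : Fin N) :
    bracket (reverseRows P) i j k = bracket P k.rev j.rev i.rev := by
  simp only [bracket_eq, reverseRows, of_apply, Pi.neg_apply]; ring

theorem bracket_rotateRows_reverseRows (P : Matrix (Fin 7) (Fin 3) R) (s i j k : Fin 7) :
    bracket (rotateRows (reverseRows P) s.rev) i j k =
      bracket (rotateRows P s) (-k) (-j) (-i) := by
  have hrev : ∀ s i : Fin 7, (i + s.rev).rev = -i + s := by decide
  change bracket (reverseRows P) (i + s.rev) (j + s.rev) (k + s.rev) =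
    bracket P (-k + s) (-j + s) (-i + s)
  simp only [bracket_reverseRows, hrev]

variable [LinearOrder R]

/-- In a suitable affine chart, the rows of `P` are homogeneous coordinates of the vertices of a
strictly convex polygon, listed counterclockwise. -/
def IsPositiveConfig {ι : Type*} [LT ι] (P : Matrix ι (Fin 3) R) : Prop :=
  ∀ ⦃i j k : ι⦄, i < j → j < k → 0 < bracket P i j k

/-- One of the two inequalities that prevent the vertex `0` of a heptagon from being the pivot of a
six-term factorization. -/
def LeftObstructed (P : Matrix (Fin 7) (Fin 3) R) : Prop :=
  bracket P 1 2 4 * bracket P 0 5 6 < bracket P 0 1 2 * bracket P 4 5 6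

/-- The mirror image of `LeftObstructed`. -/
def RightObstructed (P : Matrix (Fin 7) (Fin 3) R) : Prop :=
  bracket P 3 5 6 * bracket P 0 1 2 < bracket P 0 5 6 * bracket P 1 2 3

theorem RightObstructed.leftObstructed_reverseRows {P : Matrix (Fin 7) (Fin 3) R} {s : Fin 7}
    (h : RightObstructed (rotateRows P s)) :
    LeftObstructed (rotateRows (reverseRows P) s.rev) := by
  simp only [LeftObstructed, bracket_rotateRows_reverseRows]
  change bracket (rotateRows P s) 3 5 6 * bracket (rotateRows P s) 1 2 0 <
    bracket (rotateRows P s) 5 6 0 * bracket (rotateRows P s) 1 2 3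
  rwa [bracket_rotate _ 0 1 2, bracket_rotate _ 0 5 6]

namespace IsPositiveConfig

protected theorem reverseRows {N : ℕ} {P : Matrix (Fin N) (Fin 3) R} (hP : IsPositiveConfig P) :
    IsPositiveConfig (reverseRows P) := by
  intro i j k hij hjk
  rw [bracket_reverseRows]
  exact hP (Fin.rev_lt_rev.2 hjk) (Fin.rev_lt_rev.2 hij)

variable {P : Matrix (Fin 7) (Fin 3) R}

protected theorem rotateRows (hP : IsPositiveConfig P) (s : Fin 7) :
    IsPositiveConfig (rotateRows P s) := by
  intro i j k hij hjk
  change 0 < bracket P (i + s) (j + s) (k + s)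
  have hcyclic : i + s < j + s ∧ j + s < k + s ∨ j + s < k + s ∧ k + s < i + s ∨
      k + s < i + s ∧ i + s < j + s := by lia
  rcases hcyclic with ⟨h, h'⟩ | ⟨h, h'⟩ | ⟨h, h'⟩
  · exact hP h h'
  · exact bracket_rotate P (i + s) (j + s) (k + s) ▸ hP h h'
  · exact bracket_rotate P (k + s) (i + s) (j + s) ▸ hP h h'

end IsPositiveConfig

variable [IsStrictOrderedRing R] {P : Matrix (Fin 7) (Fin 3) R}

namespace IsPositiveConfig

theorem not_rightObstructed_of_leftObstructed (hP : IsPositiveConfig P) (hl : LeftObstructed P) :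
    ¬ RightObstructed (rotateRows P 4) := by
  intro hr
  change bracket P 0 2 3 * bracket P 4 5 6 < bracket P 4 2 3 * bracket P 5 6 0 at hr
  rw [← bracket_rotate P 4 2 3, bracket_rotate P 0 5 6] at hr
  have h023 : 0 < bracket P 0 2 3 := hP (by decide) (by decide)
  have h024 : 0 < bracket P 0 2 4 := hP (by decide) (by decide)
  have h056 : 0 < bracket P 0 5 6 := hP (by decide) (by decide)
  have h123 : 0 < bracket P 1 2 3 := hP (by decide) (by decide)
  have h124 : 0 < bracket P 1 2 4 := hP (by decide) (by decide)
  have h456 : 0 < bracket P 4 5 6 := hP (by decide) (by decide)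
  have hle : bracket P 0 1 2 * bracket P 2 3 4 < bracket P 0 2 3 * bracket P 1 2 4 := by
    rw [bracket_plucker_third P 0 1 2 3 4]
    exact lt_add_of_pos_right _ (mul_pos h024 h123)
  have hlr := mul_lt_mul'' hl hr (by positivity) (by positivity)
  refine lt_asymm hle (lt_of_mul_lt_mul_left ?_ (mul_pos h056 h456).le)
  linear_combination hlr

theorem bracket_mul_bracket_lt (hP : IsPositiveConfig P) :
    bracket P 0 1 2 * bracket P 3 4 5 < bracket P 0 1 3 * bracket P 2 4 5 := by
  have h012 : 0 < bracket P 0 1 2 := hP (by decide) (by decide)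
  have h014 : 0 < bracket P 0 1 4 := hP (by decide) (by decide)
  have h123 : 0 < bracket P 1 2 3 := hP (by decide) (by decide)
  have h124 : 0 < bracket P 1 2 4 := hP (by decide) (by decide)
  have h134 : 0 < bracket P 1 3 4 := hP (by decide) (by decide)
  have h145 : 0 < bracket P 1 4 5 := hP (by decide) (by decide)
  have h234 : 0 < bracket P 2 3 4 := hP (by decide) (by decide)
  have h345 : 0 < bracket P 3 4 5 := hP (by decide) (by decide)
  have hleft : bracket P 0 1 2 * bracket P 1 3 4 < bracket P 0 1 3 * bracket P 1 2 4 := by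
    rw [bracket_plucker_second P 0 1 2 3 4]
    exact lt_add_of_pos_right _ (mul_pos h014 h123)
  have hright : bracket P 1 2 4 * bracket P 3 4 5 < bracket P 1 3 4 * bracket P 2 4 5 := by
    rw [bracket_plucker_fourth P 1 2 3 4 5]
    exact lt_add_of_pos_right _ (mul_pos h145 h234)
  have hmul := mul_lt_mul'' hleft hright (by positivity) (by positivity)
  refine lt_of_mul_lt_mul_left ?_ (mul_pos h124 h134).le
  linear_combination hmul

theorem not_leftObstructed_of_neighbors (hP : IsPositiveConfig P) (h₀ : LeftObstructed P)
    (h₁ : LeftObstructed (rotateRows P 1)) : ¬ LeftObstructed (rotateRows P 6) := by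
  intro h₆
  change bracket P 2 3 5 * bracket P 1 6 0 < bracket P 1 2 3 * bracket P 5 6 0 at h₁
  change bracket P 0 1 3 * bracket P 6 4 5 < bracket P 6 0 1 * bracket P 3 4 5 at h₆
  rw [bracket_rotate P 0 1 6, bracket_rotate P 0 5 6] at h₁
  rw [← bracket_rotate P 6 4 5, ← bracket_rotate P 6 0 1] at h₆
  have h013 : 0 < bracket P 0 1 3 := hP (by decide) (by decide)
  have h016 : 0 < bracket P 0 1 6 := hP (by decide) (by decide)
  have h056 : 0 < bracket P 0 5 6 := hP (by decide) (by decide)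
  have h123 : 0 < bracket P 1 2 3 := hP (by decide) (by decide)
  have h124 : 0 < bracket P 1 2 4 := hP (by decide) (by decide)
  have h125 : 0 < bracket P 1 2 5 := hP (by decide) (by decide)
  have h234 : 0 < bracket P 2 3 4 := hP (by decide) (by decide)
  have h235 : 0 < bracket P 2 3 5 := hP (by decide) (by decide)
  have h456 : 0 < bracket P 4 5 6 := hP (by decide) (by decide)
  have hplucker : bracket P 1 2 3 * bracket P 2 4 5 < bracket P 1 2 4 * bracket P 2 3 5 := by
    rw [bracket_plucker_second P 1 2 3 4 5]
    exact lt_add_of_pos_right _ (mul_pos h125 h234)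
  have h₀₁ := mul_lt_mul'' h₀ h₁ (by positivity) (by positivity)
  have h₀₁₆ := mul_lt_mul'' h₀₁ h₆ (by positivity) (by positivity)
  have hscaled := mul_lt_mul_of_pos_right hplucker
    (show 0 < bracket P 0 5 6 * bracket P 0 1 6 * bracket P 4 5 6 * bracket P 0 1 3 by positivity)
  refine lt_asymm hP.bracket_mul_bracket_lt (lt_of_mul_lt_mul_left ?_
    (show 0 ≤ bracket P 0 5 6 * bracket P 0 1 6 * bracket P 4 5 6 * bracket P 1 2 3 by positivity))
  linear_combination h₀₁₆ + hscaled

theorem not_forall_leftObstructed (hP : IsPositiveConfig P) :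
    ¬ ∀ s, LeftObstructed (rotateRows P s) := by
  intro h
  have h₁ : LeftObstructed (rotateRows (rotateRows P 0) 1) := by
    simpa only [rotateRows_rotateRows] using h (1 + 0)
  have h₆ : LeftObstructed (rotateRows (rotateRows P 0) 6) := by
    simpa only [rotateRows_rotateRows] using h (6 + 0)
  exact (hP.rotateRows 0).not_leftObstructed_of_neighbors (h 0) h₁ h₆

theorem not_forall_rightObstructed (hP : IsPositiveConfig P) :
    ¬ ∀ s, RightObstructed (rotateRows P s) := fun h =>
  hP.reverseRows.not_forall_leftObstructed fun s => by
    simpa only [Fin.rev_rev] using (h s.rev).leftObstructed_reverseRows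

theorem exists_unobstructed (hP : IsPositiveConfig P) :
    ∃ s, ¬ LeftObstructed (rotateRows P s) ∧ ¬ RightObstructed (rotateRows P s) := by
  by_contra! hobstructed
  obtain ⟨s, hs⟩ : ∃ s, LeftObstructed (rotateRows P s) := by
    by_contra! hleft
    exact hP.not_forall_rightObstructed fun s => hobstructed s (hleft s)
  have hstep (t : Fin 7) (ht : LeftObstructed (rotateRows P t)) :
      LeftObstructed (rotateRows P (4 + t)) := by
    by_contra hleft
    refine (hP.rotateRows t).not_rightObstructed_of_leftObstructed ht ?_
    rw [rotateRows_rotateRows]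
    exact hobstructed (4 + t) hleft
  have hmultiple (n : ℕ) : LeftObstructed (rotateRows P (n • 4 + s)) := by
    induction n with
    | zero => simpa only [zero_nsmul, zero_add] using hs
    | succ n ih => simpa only [succ_nsmul', add_assoc] using hstep _ ih
  have hgenerates : ∀ s t : Fin 7, ∃ n : Fin 7, (n : ℕ) • 4 + s = t := by decide
  refine hP.not_forall_leftObstructed fun t => ?_
  obtain ⟨n, rfl⟩ := hgenerates s t
  exact hmultiple n

end IsPositiveConfig

end PositiveConfiguration

section Pivot

namespace NonnegRankLE

theorem of_smul_rows {K m n : Type*} [Field K] [LinearOrder K] [IsStrictOrderedRing K]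
    {A : Matrix m n K} {k : ℕ} {d : m → K} (hd : ∀ i, 0 < d i)
    (h : NonnegRankLE (of fun i => d i • A i) k) : NonnegRankLE A k := by
  obtain ⟨B, C, hB, hC, hBC⟩ := h
  refine ⟨of fun i => (d i)⁻¹ • B i, C, fun i t => mul_nonneg (inv_nonneg.2 (hd i).le) (hB i t),
    hC, ?_⟩
  ext i j
  calc
    A i j = (d i)⁻¹ * (d i * A i j) := (inv_mul_cancel_left₀ (hd i).ne' _).symm
    _ = (d i)⁻¹ * (B * C) i j := congrArg _ (congrFun₂ hBC i j)
    _ = ((of fun i => (d i)⁻¹ • B i) * C) i j := by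
      simp only [mul_apply, of_apply, Pi.smul_apply, smul_eq_mul, Finset.mul_sum, mul_assoc]

theorem of_pivot_relations {R n : Type*} [CommRing R] [LinearOrder R] [IsOrderedRing R]
    {A : Matrix (Fin 7) n R} (hA : ∀ i, 0 ≤ A i) (h₁₃ : A 0 + A 2 = A 1 + A 3)
    (h₄₆ : A 0 + A 5 = A 4 + A 6) (h₁₄ : A 0 ≤ A 1 + A 4) (h₃₆ : A 0 ≤ A 3 + A 6) :
    NonnegRankLE A 6 := by
  -- The largest vector that can be removed from the rows `0`, `1` and `6` simultaneously.
  let t : n → R := A 0 ⊓ (A 1 ⊓ A 6)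
  let C : Fin 6 → n → R := ![A 1 - t, A 6 - t, A 0 - t, A 4 - A 0 + t, A 3 - A 0 + t, t]
  have ht₀ : t ≤ A 0 := inf_le_left
  have ht₁ : t ≤ A 1 := inf_le_right.trans inf_le_left
  have ht₆ : t ≤ A 6 := inf_le_right.trans inf_le_right
  have ht_nonneg : 0 ≤ t := le_inf (hA 0) (le_inf (hA 1) (hA 6))
  have h₄ : A 0 - A 4 ≤ t := le_inf (sub_le_self _ (hA 4)) (le_inf (sub_le_iff_le_add.2 h₁₄)
    (sub_le_iff_le_add'.2 (h₄₆ ▸ le_add_of_nonneg_right (hA 5))))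
  have h₃ : A 0 - A 3 ≤ t := le_inf (sub_le_self _ (hA 3)) (le_inf
    (sub_le_iff_le_add.2 (h₁₃ ▸ le_add_of_nonneg_right (hA 2))) (sub_le_iff_le_add'.2 h₃₆))
  have hC : ∀ s, 0 ≤ C s
    | 0 => sub_nonneg.2 ht₁
    | 1 => sub_nonneg.2 ht₆
    | 2 => sub_nonneg.2 ht₀
    | 3 => show 0 ≤ A 4 - A 0 + t by linear_combination h₄
    | 4 => show 0 ≤ A 3 - A 0 + t by linear_combination h₃
    | 5 => ht_nonneg
  have hpair (s s' : Fin 6) {v : n → R} (hv : C s + C s' = v) :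
      v ∈ PointedCone.hull R (range C) :=
    hv ▸ add_mem (PointedCone.subset_hull (mem_range_self s))
      (PointedCone.subset_hull (mem_range_self s'))
  exact of_forall_mem_hull C hC fun
    | 0 => hpair 2 5 (sub_add_cancel _ _)
    | 1 => hpair 0 5 (sub_add_cancel _ _)
    | 2 => hpair 0 4 (show A 1 - t + (A 3 - A 0 + t) = A 2 by linear_combination -h₁₃)
    | 3 => hpair 2 4 (show A 0 - t + (A 3 - A 0 + t) = A 3 by ring)
    | 4 => hpair 2 3 (show A 0 - t + (A 4 - A 0 + t) = A 4 by ring)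
    | 5 => hpair 1 3 (show A 6 - t + (A 4 - A 0 + t) = A 5 by linear_combination -h₄₆)
    | 6 => hpair 1 5 (sub_add_cancel _ _)

end NonnegRankLE

namespace IsPositiveConfig

section OrderedRing

variable {R n : Type*} [CommRing R] [LinearOrder R] [IsStrictOrderedRing R]
  {P : Matrix (Fin 7) (Fin 3) R} {W : Matrix (Fin 3) n R}

theorem pivot_le_of_not_leftObstructed (hP : IsPositiveConfig P) (hA : ∀ i j, 0 ≤ (P * W) i j)
    (hl : ¬ LeftObstructed P) (j : n) :
    bracket P 1 2 3 * bracket P 4 5 6 * (P * W) 0 j ≤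
      bracket P 0 2 3 * bracket P 4 5 6 * (P * W) 1 j +
        bracket P 0 5 6 * bracket P 1 2 3 * (P * W) 4 j := by
  have h012 : 0 < bracket P 0 1 2 := hP (by decide) (by decide)
  have h014 : 0 < bracket P 0 1 4 := hP (by decide) (by decide)
  have h123 : 0 < bracket P 1 2 3 := hP (by decide) (by decide)
  have h124 : 0 < bracket P 1 2 4 := hP (by decide) (by decide)
  have h234 : 0 < bracket P 2 3 4 := hP (by decide) (by decide)
  have h456 : 0 < bracket P 4 5 6 := hP (by decide) (by decide)
  have hrow : bracket P 1 2 4 * (P * W) 0 j ≤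
      bracket P 0 2 4 * (P * W) 1 j + bracket P 0 1 2 * (P * W) 4 j := by
    rw [← bracket_mul_row_relation]
    exact le_add_of_nonneg_right (mul_nonneg h014.le (hA 2 j))
  have hone : bracket P 0 2 4 * bracket P 1 2 3 ≤ bracket P 0 2 3 * bracket P 1 2 4 := by
    rw [bracket_plucker_third P 0 1 2 3 4]
    exact le_add_of_nonneg_left (mul_pos h012 h234).le
  have hrow' := mul_le_mul_of_nonneg_left hrow (mul_pos h123 h456).le
  have hone' := mul_le_mul_of_nonneg_right hone (mul_nonneg h456.le (hA 1 j))
  have hfour' := mul_le_mul_of_nonneg_right (not_lt.1 hl) (mul_nonneg h123.le (hA 4 j))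
  refine le_of_mul_le_mul_left ?_ h124
  linear_combination hrow' + hone' + hfour'

theorem pivot_le_of_not_rightObstructed (hP : IsPositiveConfig P) (hA : ∀ i j, 0 ≤ (P * W) i j)
    (hr : ¬ RightObstructed P) (j : n) :
    bracket P 1 2 3 * bracket P 4 5 6 * (P * W) 0 j ≤
      bracket P 0 1 2 * bracket P 4 5 6 * (P * W) 3 j +
        bracket P 0 4 5 * bracket P 1 2 3 * (P * W) 6 j := by
  have h036 : 0 < bracket P 0 3 6 := hP (by decide) (by decide)
  have h056 : 0 < bracket P 0 5 6 := hP (by decide) (by decide)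
  have h123 : 0 < bracket P 1 2 3 := hP (by decide) (by decide)
  have h345 : 0 < bracket P 3 4 5 := hP (by decide) (by decide)
  have h356 : 0 < bracket P 3 5 6 := hP (by decide) (by decide)
  have h456 : 0 < bracket P 4 5 6 := hP (by decide) (by decide)
  have hrow : bracket P 3 5 6 * (P * W) 0 j ≤
      bracket P 0 5 6 * (P * W) 3 j + bracket P 0 3 5 * (P * W) 6 j := by
    rw [← bracket_mul_row_relation]
    exact le_add_of_nonneg_right (mul_nonneg h036.le (hA 5 j))
  have hsix : bracket P 0 3 5 * bracket P 4 5 6 ≤ bracket P 0 4 5 * bracket P 3 5 6 := by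
    rw [bracket_plucker_fourth P 0 3 4 5 6]
    exact le_add_of_nonneg_right (mul_pos h056 h345).le
  have hrow' := mul_le_mul_of_nonneg_left hrow (mul_pos h123 h456).le
  have hsix' := mul_le_mul_of_nonneg_right hsix (mul_nonneg h123.le (hA 6 j))
  have hthree' := mul_le_mul_of_nonneg_right (not_lt.1 hr) (mul_nonneg h456.le (hA 3 j))
  refine le_of_mul_le_mul_left ?_ h356
  linear_combination hrow' + hsix' + hthree'

end OrderedRing

variable {K n : Type*} [Field K] [LinearOrder K] [IsStrictOrderedRing K]
  {P : Matrix (Fin 7) (Fin 3) K} {W : Matrix (Fin 3) n K}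

theorem nonnegRankLE_of_not_obstructed (hP : IsPositiveConfig P) (hA : ∀ i j, 0 ≤ (P * W) i j)
    (hl : ¬ LeftObstructed P) (hr : ¬ RightObstructed P) : NonnegRankLE (P * W) 6 := by
  -- These weights turn the relations on the rows `0, 1, 2, 3` and `0, 4, 5, 6` into sums of rows.
  let d : Fin 7 → K := ![bracket P 1 2 3 * bracket P 4 5 6, bracket P 0 2 3 * bracket P 4 5 6,
    bracket P 0 1 3 * bracket P 4 5 6, bracket P 0 1 2 * bracket P 4 5 6,
    bracket P 0 5 6 * bracket P 1 2 3, bracket P 0 4 6 * bracket P 1 2 3,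
    bracket P 0 4 5 * bracket P 1 2 3]
  have h123 : 0 < bracket P 1 2 3 := hP (by decide) (by decide)
  have h456 : 0 < bracket P 4 5 6 := hP (by decide) (by decide)
  have hd : ∀ i, 0 < d i
    | 0 => mul_pos h123 h456
    | 1 | 2 | 3 => mul_pos (hP (by decide) (by decide)) h456
    | 4 | 5 | 6 => mul_pos (hP (by decide) (by decide)) h123
  refine .of_smul_rows hd (.of_pivot_relations (fun i j => mul_nonneg (hd i).le (hA i j))
    (funext fun j => ?_) (funext fun j => ?_) (hP.pivot_le_of_not_leftObstructed hA hl)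
    (hP.pivot_le_of_not_rightObstructed hA hr))
  · change bracket P 1 2 3 * bracket P 4 5 6 * (P * W) 0 j +
        bracket P 0 1 3 * bracket P 4 5 6 * (P * W) 2 j =
      bracket P 0 2 3 * bracket P 4 5 6 * (P * W) 1 j +
        bracket P 0 1 2 * bracket P 4 5 6 * (P * W) 3 j
    linear_combination bracket P 4 5 6 * bracket_mul_row_relation P W 0 1 2 3 j
  · change bracket P 1 2 3 * bracket P 4 5 6 * (P * W) 0 j +
        bracket P 0 4 6 * bracket P 1 2 3 * (P * W) 5 j =
      bracket P 0 5 6 * bracket P 1 2 3 * (P * W) 4 j +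
        bracket P 0 4 5 * bracket P 1 2 3 * (P * W) 6 j
    linear_combination bracket P 1 2 3 * bracket_mul_row_relation P W 0 4 5 6 j

theorem nonnegRankLE (hP : IsPositiveConfig P) (hA : ∀ i j, 0 ≤ (P * W) i j) :
    NonnegRankLE (P * W) 6 := by
  obtain ⟨s, hl, hr⟩ := hP.exists_unobstructed
  refine .of_submatrix (f := (· + s)) (fun i => ⟨i - s, sub_add_cancel i s⟩) ?_
  exact (hP.rotateRows s).nonnegRankLE_of_not_obstructed (fun i => hA (i + s)) hl hr

end IsPositiveConfig

end Pivot

section Irredundant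

/-- No row of `A` is a nonnegative combination of the other rows. -/
def RowsIrredundant {R m n : Type*} [Semiring R] [PartialOrder R] [IsOrderedRing R]
    (A : Matrix m n R) : Prop :=
  ∀ i, A i ∉ PointedCone.hull R (A '' {i}ᶜ)

theorem NonnegRankLE.of_not_rowsIrredundant {R n : Type*} [CommSemiring R] [PartialOrder R]
    [IsOrderedRing R] {N : ℕ} {A : Matrix (Fin (N + 1)) n R} (hA : ∀ i j, 0 ≤ A i j)
    (h : ¬ RowsIrredundant A) : NonnegRankLE A N := by
  obtain ⟨i, hi⟩ := not_forall_not.1 h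
  have hrange : range (fun t => A (i.succAbove t)) = A '' {i}ᶜ :=
    (range_comp A i.succAbove).trans (congrArg _ (Fin.range_succAbove i))
  have hmem (k : Fin (N + 1)) : A k ∈ PointedCone.hull R (range fun t => A (i.succAbove t)) := by
    rw [hrange]
    by_cases hk : k = i
    · exact hk ▸ hi
    · exact PointedCone.subset_hull (mem_image_of_mem A hk)
  simpa only [Fintype.card_fin] using of_forall_mem_hull _ (fun t => hA (i.succAbove t)) hmem

namespace RowsIrredundant

variable {K m n : Type*} [Field K] [LinearOrder K] [IsStrictOrderedRing K]

theorem eq_zero_of_vecMul_eq_zero {ι : Type*} [Fintype ι] {A : Matrix m n K}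
    (hirr : RowsIrredundant A) (hA : ∀ i j, 0 ≤ A i j) {f : ι → m} {x : ι → K} {t₀ : ι}
    (hf : ∀ t ≠ t₀, f t ≠ f t₀) (hx : ∀ t ≠ t₀, x t ≤ 0) (h : x ᵥ* A.submatrix f id = 0) :
    x = 0 := by
  classical
  have hsum : ∑ t, x t • A (f t) = 0 := (vecMul_eq_sum x _).symm.trans h
  have hrest : x t₀ • A (f t₀) = ∑ t ∈ Finset.univ.erase t₀, (-x t) • A (f t) := by
    rw [← Finset.add_sum_erase _ _ (Finset.mem_univ t₀)] at hsum
    simpa only [neg_smul, Finset.sum_neg_distrib] using eq_neg_of_add_eq_zero_left hsum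
  have ht₀ : x t₀ ≤ 0 := by
    by_contra! hpos
    refine hirr (f t₀) ?_
    rw [← inv_smul_smul₀ hpos.ne' (A (f t₀)), hrest]
    refine PointedCone.smul_mem _ (inv_nonneg.2 hpos.le) (sum_mem fun t ht => ?_)
    have hne := Finset.ne_of_mem_erase ht
    exact PointedCone.smul_mem _ (neg_nonneg.2 (hx t hne))
      (PointedCone.subset_hull (mem_image_of_mem A (hf t hne)))
  have hnonpos (t : ι) : x t ≤ 0 := (eq_or_ne t t₀).elim (fun h => h ▸ ht₀) (hx t)
  funext t
  have hrow : A (f t) ≠ 0 := fun h => hirr (f t) (h ▸ zero_mem _)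
  obtain ⟨j, hj⟩ := Function.ne_iff.1 hrow
  have hterms : ∀ s ∈ Finset.univ, x s * A (f s) j ≤ 0 := fun s _ =>
    mul_nonpos_of_nonpos_of_nonneg (hnonpos s) (hA _ _)
  have hzero := (Finset.sum_eq_zero_iff_of_nonpos hterms).1 (congrFun h j) t (Finset.mem_univ t)
  exact (mul_eq_zero.1 hzero).resolve_right hj

variable {P : Matrix m (Fin 3) K} {W : Matrix (Fin 3) n K}

theorem bracket_ne_zero (hirr : RowsIrredundant (P * W)) (hA : ∀ i j, 0 ≤ (P * W) i j)
    {a b c : m} (habc : Function.Injective ![a, b, c]) : bracket P a b c ≠ 0 := by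
  intro hdet
  have hrows : of ![P a, P b, P c] = P.submatrix ![a, b, c] id := by
    ext t; fin_cases t <;> rfl
  rw [bracket, hrows] at hdet
  obtain ⟨v, hv, hvP⟩ := exists_vecMul_eq_zero_iff.2 hdet
  have hvA : v ᵥ* (P * W).submatrix ![a, b, c] id = 0 := by
    rw [show (P * W).submatrix ![a, b, c] id = P.submatrix ![a, b, c] id * W from rfl,
      ← vecMul_vecMul, hvP, zero_vecMul]
  obtain ⟨t₀, hneg | hpos⟩ : ∃ t₀, (∀ t ≠ t₀, v t ≤ 0) ∨ ∀ t ≠ t₀, 0 ≤ v t := by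
    simp only [Fin.exists_fin_succ, Fin.forall_fin_succ]
    grind
  · exact hv (hirr.eq_zero_of_vecMul_eq_zero hA (fun t => habc.ne) hneg hvA)
  · refine hv (neg_eq_zero.1 (hirr.eq_zero_of_vecMul_eq_zero hA (fun t => habc.ne)
      (fun t ht => neg_nonpos.2 (hpos t ht)) ?_))
    rw [neg_vecMul, hvA, neg_zero]

theorem bracket_pos_of_first (hirr : RowsIrredundant (P * W)) (hA : ∀ i j, 0 ≤ (P * W) i j)
    {a b c d : m} (hb : b ≠ a) (hc : c ≠ a) (hd : d ≠ a) (habc : 0 < bracket P a b c)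
    (hacd : 0 < bracket P a c d) : 0 < bracket P a b d := by
  by_contra! habd
  have hzero := hirr.eq_zero_of_vecMul_eq_zero hA (t₀ := 0)
    (by simp [Fin.forall_fin_succ, hb, hc, hd])
    (by simp [Fin.forall_fin_succ, habc.le, hacd.le, habd]) (bracket_vecMul_submatrix P W a b c d)
  exact habc.ne' (neg_eq_zero.1 (congrFun hzero 3))

theorem bracket_pos_of_third (hirr : RowsIrredundant (P * W)) (hA : ∀ i j, 0 ≤ (P * W) i j)
    {a b c d : m} (ha : a ≠ c) (hb : b ≠ c) (hd : d ≠ c) (habc : 0 < bracket P a b c)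
    (hacd : 0 < bracket P a c d) : 0 < bracket P b c d := by
  by_contra! hbcd
  have hzero := hirr.eq_zero_of_vecMul_eq_zero hA (t₀ := 2)
    (by simp [Fin.forall_fin_succ, ha, hb, hd])
    (by simp [Fin.forall_fin_succ, habc.le, hacd.le, hbcd]) (bracket_vecMul_submatrix P W a b c d)
  exact habc.ne' (neg_eq_zero.1 (congrFun hzero 3))

end RowsIrredundant

end Irredundant

section Sorting

theorem exists_equiv_fin_lt_imp {α : Type*} [Fintype α] (r : α → α → Prop)
    [IsStrictTotalOrder α r] {N : ℕ} (hN : Fintype.card α = N) :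
    ∃ e : Fin N ≃ α, ∀ ⦃i j⦄, i < j → r (e i) (e j) := by
  classical
  let := linearOrderOfSTO r
  let e := Fintype.orderIsoFinOfCardEq α hN
  exact ⟨e.toEquiv, fun i j hij => e.lt_iff_lt.2 hij⟩

namespace RowsIrredundant

variable {K n : Type*} [Field K] [LinearOrder K] [IsStrictOrderedRing K] {N : ℕ}
  {P : Matrix (Fin (N + 1)) (Fin 3) K} {W : Matrix (Fin 3) n K}

theorem isStrictTotalOrder_bracket (hirr : RowsIrredundant (P * W))
    (hA : ∀ i j, 0 ≤ (P * W) i j) :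
    IsStrictTotalOrder (Fin N) fun i j => 0 < bracket P 0 i.succ j.succ where
  irrefl i := by simp only [bracket_self_right, lt_irrefl, not_false_eq_true]
  trans i j k := hirr.bracket_pos_of_first hA (Fin.succ_ne_zero i) (Fin.succ_ne_zero j)
    (Fin.succ_ne_zero k)
  trichotomous i j hij hji := by
    by_contra hne
    have hinj : Function.Injective ![0, i.succ, j.succ] := by
      simp [Function.Injective, Fin.forall_fin_succ, hne, Ne.symm hne, (Fin.succ_ne_zero _).symm]
    rw [bracket_swap, neg_pos, not_lt] at hji
    exact hirr.bracket_ne_zero hA hinj (le_antisymm (not_lt.1 hij) hji)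

theorem exists_perm_isPositiveConfig (hirr : RowsIrredundant (P * W))
    (hA : ∀ i j, 0 ≤ (P * W) i j) :
    ∃ σ : Equiv.Perm (Fin (N + 1)), IsPositiveConfig (P.submatrix σ id) := by
  have := hirr.isStrictTotalOrder_bracket hA
  obtain ⟨e, he⟩ := exists_equiv_fin_lt_imp
    (fun i j : Fin N => 0 < bracket P 0 i.succ j.succ) (Fintype.card_fin N)
  let σ := Equiv.Perm.decomposeFin.symm (0, e)
  have hfirst {i j : Fin (N + 1)} (hi : 0 < i) (hij : i < j) :
      0 < bracket P (σ 0) (σ i) (σ j) := by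
    obtain ⟨i, rfl⟩ := Fin.exists_succ_eq.2 hi.ne'
    obtain ⟨j, rfl⟩ := Fin.exists_succ_eq.2 (hi.trans hij).ne'
    simpa [σ] using he (Fin.succ_lt_succ_iff.1 hij)
  refine ⟨σ, fun i j k hij hjk => ?_⟩
  change 0 < bracket P (σ i) (σ j) (σ k)
  rcases eq_zero_or_pos i with rfl | hi
  · exact hfirst hij hjk
  · exact hirr.bracket_pos_of_third hA (σ.injective.ne (hi.trans hij).ne)
      (σ.injective.ne hij.ne) (σ.injective.ne hjk.ne') (hfirst hi hij)
      (hfirst (hi.trans hij) hjk)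

end RowsIrredundant

end Sorting

section RankThree

theorem exists_eq_mul_of_rank_le {K m n : Type*} [Field K] [Finite m] [Fintype n]
    {A : Matrix m n K} {r : ℕ} (hA : A.rank ≤ r) :
    ∃ (P : Matrix m (Fin r) K) (W : Matrix (Fin r) n K), A = P * W := by
  classical
  have := Fintype.ofFinite m
  obtain ⟨f, hf⟩ := finrank_le_iff_exists_linearMap (R := K) (M' := Fin r → K).1
    (hA.trans_eq (Module.finrank_fin_fun K).symm)
  obtain ⟨g, hg⟩ := f.exists_leftInverse_of_injective (LinearMap.ker_eq_bot.2 hf)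
  refine ⟨(A.mulVecLin.range.subtype ∘ₗ g).toMatrix', (f ∘ₗ A.mulVecLin.rangeRestrict).toMatrix',
    ?_⟩
  rw [← LinearMap.toMatrix'_comp, LinearMap.comp_assoc, ← LinearMap.comp_assoc _ f g, hg,
    LinearMap.id_comp, LinearMap.subtype_comp_codRestrict, ← toLin'_apply',
    LinearMap.toMatrix'_toLin']

namespace NonnegRankLE

variable {K m n : Type*} [Field K] [LinearOrder K] [IsStrictOrderedRing K]

theorem mul_of_seven_rows {P : Matrix (Fin 7) (Fin 3) K} {W : Matrix (Fin 3) n K}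
    (hA : ∀ i j, 0 ≤ (P * W) i j) : NonnegRankLE (P * W) 6 := by
  by_cases hirr : RowsIrredundant (P * W)
  · obtain ⟨σ, hσ⟩ := hirr.exists_perm_isPositiveConfig hA
    exact .of_submatrix σ.surjective (hσ.nonnegRankLE fun i => hA (σ i))
  · exact .of_not_rowsIrredundant hA hirr

variable [Fintype m] [Fintype n] {A : Matrix m n K}

theorem of_rank_le_three {k : ℕ} (hA : ∀ i j, 0 ≤ A i j) (hrank : A.rank ≤ 3)
    (hk : 6 * Fintype.card m ≤ 7 * k) : NonnegRankLE A k := by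
  obtain ⟨P, W, rfl⟩ := exists_eq_mul_of_rank_le hrank
  exact of_forall_fin_submatrix hA
    (fun f => mul_of_seven_rows (P := P.submatrix f id) fun i => hA (f i)) hk

end NonnegRankLE

theorem nonneg_rank_le_of_rank_three_general {K m n : Type*} [Field K] [LinearOrder K]
    [IsStrictOrderedRing K] [Fintype m] [Fintype n] {A : Matrix m n K} (hA : ∀ i j, 0 ≤ A i j)
    (hrank : A.rank ≤ 3) :
    NonnegRankLE A ⌈(6 * (min (Fintype.card m) (Fintype.card n) : ℚ)) / 7⌉₊ := by
  have hceil : 6 * min (Fintype.card m) (Fintype.card n) ≤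
      7 * ⌈(6 * (min (Fintype.card m) (Fintype.card n) : ℚ)) / 7⌉₊ := by
    have := (div_le_iff₀' (by norm_num)).1
      (Nat.le_ceil ((6 * (min (Fintype.card m) (Fintype.card n) : ℚ)) / 7))
    exact_mod_cast this
  rcases le_total (Fintype.card m) (Fintype.card n) with hmn | hnm
  · exact .of_rank_le_three hA hrank ((Nat.mul_le_mul_left 6 (le_min le_rfl hmn)).trans hceil)
  · have hAT : NonnegRankLE Aᵀ _ := .of_rank_le_three (fun j i => hA i j)
      (A.rank_transpose.trans_le hrank)
      ((Nat.mul_le_mul_left 6 (le_min hnm le_rfl)).trans hceil)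
    exact hAT.transpose

end RankThree

/-- A rank-three nonnegative m×n real matrix has nonnegative rank at most
`⌈6 * min m n / 7⌉`, witnessed by an explicit nonnegative factorization. -/
theorem nonneg_rank_le_of_rank_three (m n : ℕ) (A : Matrix (Fin m) (Fin n) ℝ)
    (hA : ∀ i j, 0 ≤ A i j) (hrank : A.rank = 3) :
    ∃ (B : Matrix (Fin m) (Fin ⌈(6 * (min m n : ℚ)) / 7⌉₊) ℝ)
      (C : Matrix (Fin ⌈(6 * (min m n : ℚ)) / 7⌉₊) (Fin n) ℝ),
      (∀ i j, 0 ≤ B i j) ∧ (∀ i j, 0 ≤ C i j) ∧ A = B * C := by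
  have h := nonneg_rank_le_of_rank_three_general hA hrank.le
  rwa [Fintype.card_fin, Fintype.card_fin] at h
end

section
/- For every k ∈ {3, 4, 5, 6} there exists a k×k real matrix with all entries nonnegative whose classical rank equals 3 and whose nonnegative rank equals k (i.e., it admits no factorization A = B·C with B a nonnegative k×(k−1) matrix and C a nonnegative (k−1)×k matrix). -/
/-!
The matrices are slack matrices of convex polygons. A nonnegative factorization covers the nonzero
entries by rank-one terms which vanish wherever the matrix does, so entries of a fooling set lie in
different terms. For `k ≤ 5` the entries `(i, i + 1)` of the slack matrix of a convex `k`-gon form a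
fooling set.

For the hexagon a term can only contain two of the six entries `(i, i + 1)` if they are opposite,
`(i, i + 1)` and `(i + 3, i + 4)`. If the hexagon is skewed so that for two of the three opposite
pairs a `2 × 2` minor forbids covering both entries by one term alone, then five terms leave only a
single one for the third pair. Subtracting it, the other four terms are pinned down by a fooling set
of size four, and their supports force a polynomial identity between the entries, which a generic
hexagon violates.
-/

open Matrix

variable {R m n κ σ : Type*}

/-- `A = B * C` with `B` and `C` entrywise nonnegative; the size of the inner index type `κ` is the
number of rank-one terms. The term `l : κ` covers the entry `(i, j)` when `B i l * C l j ≠ 0`. -/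
structure IsNonnegFactorization [Fintype κ] [Semiring R] [LE R]
    (A : Matrix m n R) (B : Matrix m κ R) (C : Matrix κ n R) : Prop where
  left_nonneg : ∀ i l, 0 ≤ B i l
  right_nonneg : ∀ l j, 0 ≤ C l j
  eq_mul : A = B * C

/-- The entries `(r s, c s)` form a fooling set of `A`: they are nonzero, and no two of them lie in
a common rectangle of nonzero entries. Its size bounds the number of terms of a nonnegative
factorization from below. -/
structure IsFoolingSet [Zero R] (A : Matrix m n R) (r : σ → m) (c : σ → n) : Prop where
  apply_ne_zero : ∀ s, A (r s) (c s) ≠ 0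
  apply_eq_zero_or : ∀ s t, s ≠ t → A (r s) (c t) = 0 ∨ A (r t) (c s) = 0

namespace IsNonnegFactorization

section Semiring

variable [Fintype κ] [Semiring R] {A : Matrix m n R} {B : Matrix m κ R} {C : Matrix κ n R}

theorem apply_eq_sum [LE R] (h : IsNonnegFactorization A B C) (i : m) (j : n) :
    A i j = ∑ l, B i l * C l j := by
  rw [h.eq_mul, mul_apply]

theorem exists_covering [LE R] (h : IsNonnegFactorization A B C) {i : m} {j : n}
    (hA : A i j ≠ 0) : ∃ l, B i l * C l j ≠ 0 := by
  rw [h.apply_eq_sum] at hA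
  obtain ⟨l, -, hl⟩ := Finset.exists_ne_zero_of_sum_ne_zero hA
  exact ⟨l, hl⟩

theorem reindex [LE R] {ι : Type*} [Fintype ι] (h : IsNonnegFactorization A B C) (e : ι ≃ κ) :
    IsNonnegFactorization A (B.submatrix id e) (C.submatrix e id) where
  left_nonneg i l := h.left_nonneg i (e l)
  right_nonneg l j := h.right_nonneg (e l) j
  eq_mul := by rw [submatrix_mul_equiv, ← h.eq_mul, submatrix_id_id]

theorem exists_erase_term [LE R] (h : IsNonnegFactorization A B C) (y : κ) [Fintype {l // l ≠ y}] :
    ∃ (A' : Matrix m n R) (B' : Matrix m {l // l ≠ y} R) (C' : Matrix {l // l ≠ y} n R),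
      IsNonnegFactorization A' B' C' ∧ (∀ i j, A i j = B i y * C y j + A' i j) ∧
        ∀ i j, (∀ l ≠ y, B i l * C l j = 0) → A' i j = 0 := by
  classical
  refine ⟨_, B.submatrix id (↑), C.submatrix (↑) id,
    ⟨fun i l ↦ h.left_nonneg i l, fun l j ↦ h.right_nonneg l j, rfl⟩, fun i j ↦ ?_,
    fun i j hzero ↦ ?_⟩
  · rw [h.apply_eq_sum, Fintype.sum_eq_add_sum_subtype_ne _ y]
    simp only [mul_apply, submatrix_apply, id_eq]
    congr!
  · simp [mul_apply, fun l : {l // l ≠ y} ↦ hzero l l.2]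

variable [PartialOrder R] [IsOrderedRing R]

theorem apply_nonneg (h : IsNonnegFactorization A B C) (i : m) (j : n) : 0 ≤ A i j := by
  rw [h.apply_eq_sum]
  exact Finset.sum_nonneg fun l _ ↦ mul_nonneg (h.left_nonneg i l) (h.right_nonneg l j)

theorem mul_le_apply (h : IsNonnegFactorization A B C) (i : m) (l : κ) (j : n) :
    B i l * C l j ≤ A i j := by
  rw [h.apply_eq_sum]
  exact Finset.single_le_sum (f := fun l ↦ B i l * C l j)
    (fun l _ ↦ mul_nonneg (h.left_nonneg i l) (h.right_nonneg l j)) (Finset.mem_univ l)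

variable [NoZeroDivisors R]

theorem left_eq_zero_or_right_eq_zero (h : IsNonnegFactorization A B C) {i : m} {j : n}
    (hA : A i j = 0) (l : κ) : B i l = 0 ∨ C l j = 0 :=
  mul_eq_zero.1 <| le_antisymm (hA ▸ h.mul_le_apply i l j)
    (mul_nonneg (h.left_nonneg i l) (h.right_nonneg l j))

theorem left_eq_zero (h : IsNonnegFactorization A B C) {i : m} {j : n} {l : κ}
    (hC : C l j ≠ 0) (hA : A i j = 0) : B i l = 0 :=
  (h.left_eq_zero_or_right_eq_zero hA l).resolve_right hC

theorem right_eq_zero (h : IsNonnegFactorization A B C) {i : m} {j : n} {l : κ}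
    (hB : B i l ≠ 0) (hA : A i j = 0) : C l j = 0 :=
  (h.left_eq_zero_or_right_eq_zero hA l).resolve_left hB

theorem ne_of_covering (h : IsNonnegFactorization A B C) {i i' : m} {j j' : n} {l l' : κ}
    (hl : B i l * C l j ≠ 0) (hl' : B i' l' * C l' j' ≠ 0) (hA : A i j' = 0 ∨ A i' j = 0) :
    l ≠ l' := by
  rintro rfl
  rcases hA with hA | hA
  · exact left_ne_zero_of_mul hl (h.left_eq_zero (right_ne_zero_of_mul hl') hA)
  · exact left_ne_zero_of_mul hl' (h.left_eq_zero (right_ne_zero_of_mul hl) hA)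

theorem exists_injective_covering (h : IsNonnegFactorization A B C) {r : σ → m} {c : σ → n}
    (hrc : IsFoolingSet A r c) :
    ∃ f : σ → κ, f.Injective ∧ ∀ s, B (r s) (f s) * C (f s) (c s) ≠ 0 := by
  choose f hf using fun s ↦ h.exists_covering (hrc.apply_ne_zero s)
  refine ⟨f, fun s t hst ↦ ?_, hf⟩
  by_contra hne
  exact h.ne_of_covering (hf s) (hf t) (hrc.apply_eq_zero_or s t hne) hst

theorem card_le_of_isFoolingSet [Fintype σ] (h : IsNonnegFactorization A B C) {r : σ → m}
    {c : σ → n} (hrc : IsFoolingSet A r c) : Fintype.card σ ≤ Fintype.card κ := by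
  obtain ⟨f, hf, -⟩ := h.exists_injective_covering hrc
  exact Fintype.card_le_of_injective f hf

end Semiring

/-- A single term `l` with all of `A i j` and `A i' j'` in it would have
`A i j * A i' j' = (B i l * C l j') * (B i' l * C l j) ≤ A i j' * A i' j`. -/
theorem exists_ne_covering_of_mul_lt_mul [Fintype κ] [CommSemiring R] [PartialOrder R]
    [IsOrderedRing R] {A : Matrix m n R} {B : Matrix m κ R} {C : Matrix κ n R}
    (h : IsNonnegFactorization A B C) {i i' : m} {j j' : n}
    (hlt : A i j' * A i' j < A i j * A i' j') :
    ∃ l l', l ≠ l' ∧ (B i l * C l j ≠ 0 ∨ B i' l * C l j' ≠ 0) ∧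
      (B i l' * C l' j ≠ 0 ∨ B i' l' * C l' j' ≠ 0) := by
  have hA : A i j ≠ 0 := fun hA ↦ by
    rw [hA, zero_mul] at hlt
    exact hlt.not_ge (mul_nonneg (h.apply_nonneg i j') (h.apply_nonneg i' j))
  obtain ⟨l, hl⟩ := h.exists_covering hA
  by_contra! hunique
  have only_l : ∀ l', l' ≠ l → B i l' * C l' j = 0 ∧ B i' l' * C l' j' = 0 :=
    fun l' hne ↦ hunique l l' hne.symm (Or.inl hl)
  have hij : A i j = B i l * C l j := by
    rw [h.apply_eq_sum, Fintype.sum_eq_single l fun l' hne ↦ (only_l l' hne).1]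
  have hij' : A i' j' = B i' l * C l j' := by
    rw [h.apply_eq_sum, Fintype.sum_eq_single l fun l' hne ↦ (only_l l' hne).2]
  refine hlt.not_ge ?_
  calc A i j * A i' j' = (B i l * C l j') * (B i' l * C l j) := by rw [hij, hij']; ring
    _ ≤ A i j' * A i' j := mul_le_mul (h.mul_le_apply i l j') (h.mul_le_apply i' l j)
        (mul_nonneg (h.left_nonneg i' l) (h.right_nonneg l j)) (h.apply_nonneg i j')

end IsNonnegFactorization

/-- The zero pattern of the slack matrix of a convex polygon: the rows are the vertices in cyclic
order and column `j` is the edge joining the vertices `j` and `j + 1`. -/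
def IsPolygonPattern [Zero R] {k : ℕ} [NeZero k] (A : Matrix (Fin k) (Fin k) R) : Prop :=
  ∀ i j, A i j = 0 ↔ i = j ∨ i = j + 1

namespace IsPolygonPattern

theorem isFoolingSet [Zero R] {k : ℕ} (hk : k ≤ 2)
    {A : Matrix (Fin (k + 3)) (Fin (k + 3)) R} (hA : IsPolygonPattern A) :
    IsFoolingSet A id (· + 1) := by
  constructor
  · intro i
    rw [id, Ne, hA]
    revert i
    interval_cases k <;> decide
  · intro i j
    rw [id, id, hA, hA]
    revert i j
    interval_cases k <;> decide

theorem three_le_rank [CommRing R] [IsDomain R] {k : ℕ}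
    {A : Matrix (Fin (k + 3)) (Fin (k + 3)) R} (hA : IsPolygonPattern A) : 3 ≤ A.rank := by
  let first (i : Fin 3) : Fin (k + 3) := i.castLE (Nat.le_add_left 3 k)
  let M := A.submatrix first first
  have hM (i j : Fin 3) : M i j = 0 ↔
      i.val = j.val ∨ i.val = if j.val = k + 2 then 0 else j.val + 1 := by
    simp [M, first, hA (first i), Fin.ext_iff, Fin.val_add_one]
  have h10 : M 1 0 = 0 := by simp [hM]
  have h21 : M 2 1 = 0 := by simp [hM]
  have hself i : M i i = 0 := by simp [hM]
  have h01 : M 0 1 ≠ 0 := by simp [hM]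
  have h12 : M 1 2 ≠ 0 := by rw [Ne, hM]; grind
  have h20 : M 2 0 ≠ 0 := by simp [hM]
  have hdet : M.det = M 0 1 * M 1 2 * M 2 0 := by simp [det_fin_three, hself, h10, h21]
  calc 3 = M.rank := by
        rw [rank_of_det_ne_zero (hdet ▸ mul_ne_zero (mul_ne_zero h01 h12) h20), Fintype.card_fin]
    _ ≤ A.rank := rank_submatrix_le A _ _

end IsPolygonPattern

/-- The zero pattern left from a hexagon after subtracting a rank-one term that covers the entries
`(2, 3)` and `(5, 0)` completely; this term lives in the rows `2`, `5` and the columns `0`, `3`. -/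
structure IsCutHexagonPattern [Zero R] (A : Matrix (Fin 6) (Fin 6) R) : Prop where
  apply_self : ∀ j, A j j = 0
  apply_succ : ∀ j, A (j + 1) j = 0
  apply_two_three : A 2 3 = 0
  apply_five_zero : A 5 0 = 0
  apply_ne_zero : ∀ i j, ¬(i = j ∨ i = j + 1 ∨ (i = 2 ∨ i = 5) ∧ (j = 0 ∨ j = 3)) → A i j ≠ 0

theorem IsCutHexagonPattern.isFoolingSet [Zero R] {A : Matrix (Fin 6) (Fin 6) R}
    (hA : IsCutHexagonPattern A) : IsFoolingSet A ![2, 5, 1, 4] ![4, 1, 3, 0] := by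
  have h21 : A 2 1 = 0 := hA.apply_succ 1
  have h54 : A 5 4 = 0 := hA.apply_succ 4
  have h10 : A 1 0 = 0 := hA.apply_succ 0
  have h43 : A 4 3 = 0 := hA.apply_succ 3
  constructor
  · intro s
    fin_cases s <;> exact hA.apply_ne_zero _ _ (by decide)
  · intro s t
    fin_cases s <;> fin_cases t <;>
      simp [h21, h54, h10, h43, hA.apply_self, hA.apply_two_three, hA.apply_five_zero]

namespace IsNonnegFactorization

variable [CommSemiring R] [PartialOrder R] [IsOrderedRing R] [NoZeroDivisors R]
  {A : Matrix (Fin 6) (Fin 6) R}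

section FourTerms

variable {B : Matrix (Fin 6) (Fin 4) R} {C : Matrix (Fin 4) (Fin 6) R}

theorem cutHexagon_left_zeros (h : IsNonnegFactorization A B C) (hA : IsCutHexagonPattern A)
    (hcov : ∀ s, B (![2, 5, 1, 4] s) s * C s (![4, 1, 3, 0] s) ≠ 0) :
    (B 4 0 = 0 ∧ B 5 0 = 0) ∧ (B 1 1 = 0 ∧ B 2 1 = 0) ∧
      (B 2 2 = 0 ∧ B 3 2 = 0 ∧ B 4 2 = 0) ∧ (B 0 3 = 0 ∧ B 1 3 = 0 ∧ B 5 3 = 0) := by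
  have hC s := right_ne_zero_of_mul (hcov s)
  exact ⟨⟨h.left_eq_zero (hC 0) (hA.apply_self 4), h.left_eq_zero (hC 0) (hA.apply_succ 4)⟩,
    ⟨h.left_eq_zero (hC 1) (hA.apply_self 1), h.left_eq_zero (hC 1) (hA.apply_succ 1)⟩,
    ⟨h.left_eq_zero (hC 2) hA.apply_two_three, h.left_eq_zero (hC 2) (hA.apply_self 3),
      h.left_eq_zero (hC 2) (hA.apply_succ 3)⟩,
    ⟨h.left_eq_zero (hC 3) (hA.apply_self 0), h.left_eq_zero (hC 3) (hA.apply_succ 0),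
      h.left_eq_zero (hC 3) hA.apply_five_zero⟩⟩

theorem cutHexagon_left_three_one_eq_zero (h : IsNonnegFactorization A B C)
    (hA : IsCutHexagonPattern A)
    (hcov : ∀ s, B (![2, 5, 1, 4] s) s * C s (![4, 1, 3, 0] s) ≠ 0) : B 3 1 = 0 := by
  by_contra hB31
  obtain ⟨⟨hB40, hB50⟩, ⟨-, hB21⟩, ⟨hB22, -, hB42⟩, ⟨hB03, -, hB53⟩⟩ :=
    h.cutHexagon_left_zeros hA hcov
  have hC14 : C 1 4 = 0 := h.right_eq_zero (left_ne_zero_of_mul (hcov 1)) (hA.apply_succ 4)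
  have sum_four i j := (h.apply_eq_sum i j).trans (Fin.sum_univ_four _)
  have hC12 : C 1 2 = 0 := h.right_eq_zero hB31 (hA.apply_succ 2)
  have h42 : A 4 2 = B 4 3 * C 3 2 := by simp [sum_four, hB40, hC12, hB42]
  have hC32 : C 3 2 ≠ 0 := right_ne_zero_of_mul (h42 ▸ hA.apply_ne_zero 4 2 (by decide))
  have hB23 : B 2 3 = 0 := h.left_eq_zero hC32 (hA.apply_self 2)
  have h52 : A 5 2 = B 5 2 * C 2 2 := by simp [sum_four, hB50, hC12, hB53]
  have hB52 : B 5 2 ≠ 0 := left_ne_zero_of_mul (h52 ▸ hA.apply_ne_zero 5 2 (by decide))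
  have hC24 : C 2 4 = 0 := h.right_eq_zero hB52 (hA.apply_succ 4)
  have h25 : A 2 5 = B 2 0 * C 0 5 := by simp [sum_four, hB21, hB22, hB23]
  have hC05 : C 0 5 ≠ 0 := right_ne_zero_of_mul (h25 ▸ hA.apply_ne_zero 2 5 (by decide))
  have hB00 : B 0 0 = 0 := h.left_eq_zero hC05 (hA.apply_succ 5)
  have h04 : A 0 4 = 0 := by simp [sum_four, hB00, hC14, hC24, hB03]
  exact hA.apply_ne_zero 0 4 (by decide) h04

theorem cutHexagon_identity_of_covering (h : IsNonnegFactorization A B C)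
    (hA : IsCutHexagonPattern A)
    (hcov : ∀ s, B (![2, 5, 1, 4] s) s * C s (![4, 1, 3, 0] s) ≠ 0) :
    A 1 4 * A 0 3 * A 2 5 = A 1 3 * A 0 4 * A 2 5 + A 1 5 * A 2 4 * A 0 3 := by
  obtain ⟨⟨hB40, -⟩, ⟨hB11, hB21⟩, ⟨hB22, hB32, hB42⟩, ⟨hB03, hB13, -⟩⟩ :=
    h.cutHexagon_left_zeros hA hcov
  have hB31 : B 3 1 = 0 := h.cutHexagon_left_three_one_eq_zero hA hcov
  have hB20 : B 2 0 ≠ 0 := left_ne_zero_of_mul (hcov 0)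
  have hC01 : C 0 1 = 0 := h.right_eq_zero hB20 (hA.apply_succ 1)
  have hC03 : C 0 3 = 0 := h.right_eq_zero hB20 hA.apply_two_three
  have hC14 : C 1 4 = 0 := h.right_eq_zero (left_ne_zero_of_mul (hcov 1)) (hA.apply_succ 4)
  have sum_four i j := (h.apply_eq_sum i j).trans (Fin.sum_univ_four _)
  have h31 : A 3 1 = B 3 3 * C 3 1 := by simp [sum_four, hC01, hB31, hB32]
  have h31_ne : B 3 3 * C 3 1 ≠ 0 := h31 ▸ hA.apply_ne_zero 3 1 (by decide)
  have hC32 : C 3 2 = 0 := h.right_eq_zero (left_ne_zero_of_mul h31_ne) (hA.apply_succ 2)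
  have hB23 : B 2 3 = 0 := h.left_eq_zero (right_ne_zero_of_mul h31_ne) (hA.apply_succ 1)
  have h42 : A 4 2 = B 4 1 * C 1 2 := by simp [sum_four, hB40, hB42, hC32]
  have hB41 : B 4 1 ≠ 0 := left_ne_zero_of_mul (h42 ▸ hA.apply_ne_zero 4 2 (by decide))
  have hC13 : C 1 3 = 0 := h.right_eq_zero hB41 (hA.apply_succ 3)
  have h03 : A 0 3 = B 0 2 * C 2 3 := by simp [sum_four, hC03, hC13, hB03]
  have hB02 : B 0 2 ≠ 0 := left_ne_zero_of_mul (h03 ▸ hA.apply_ne_zero 0 3 (by decide))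
  have hC25 : C 2 5 = 0 := h.right_eq_zero hB02 (hA.apply_succ 5)
  have h25 : A 2 5 = B 2 0 * C 0 5 := by simp [sum_four, hB21, hB22, hB23]
  have hC05 : C 0 5 ≠ 0 := right_ne_zero_of_mul (h25 ▸ hA.apply_ne_zero 2 5 (by decide))
  have hB00 : B 0 0 = 0 := h.left_eq_zero hC05 (hA.apply_succ 5)
  have h04 : A 0 4 = B 0 2 * C 2 4 := by simp [sum_four, hB00, hC14, hB03]
  have h13 : A 1 3 = B 1 2 * C 2 3 := by simp [sum_four, hC03, hB11, hB13]
  have h14 : A 1 4 = B 1 0 * C 0 4 + B 1 2 * C 2 4 := by simp [sum_four, hB11, hB13]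
  have h15 : A 1 5 = B 1 0 * C 0 5 := by simp [sum_four, hB11, hC25, hB13]
  have h24 : A 2 4 = B 2 0 * C 0 4 := by simp [sum_four, hB21, hB22, hB23]
  rw [h03, h04, h13, h14, h15, h24, h25]
  ring

end FourTerms

variable [Fintype κ] {B : Matrix (Fin 6) κ R} {C : Matrix κ (Fin 6) R}

theorem cutHexagon_identity (h : IsNonnegFactorization A B C) (hA : IsCutHexagonPattern A)
    (hκ : Fintype.card κ ≤ 4) :
    A 1 4 * A 0 3 * A 2 5 = A 1 3 * A 0 4 * A 2 5 + A 1 5 * A 2 4 * A 0 3 := by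
  obtain ⟨f, hf, hcov⟩ := h.exists_injective_covering hA.isFoolingSet
  have hbij : f.Bijective := (Fintype.bijective_iff_injective_and_card f).2
    ⟨hf, (Fintype.card_le_of_injective f hf).antisymm (hκ.trans_eq (Fintype.card_fin 4).symm)⟩
  exact (h.reindex (.ofBijective f hbij)).cutHexagon_identity_of_covering hA hcov

/-- The terms meeting an opposite pair of entries `(s, s + 1)`, `(s + 3, s + 4)` are disjoint from
those meeting another such pair, and the pairs `s = 0, 1` take up at least two terms each. -/
theorem card_covering_two_three_le_one [DecidableEq R] (h : IsNonnegFactorization A B C)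
    (hA : IsPolygonPattern A) (hκ : Fintype.card κ ≤ 5) (h₀ : A 0 4 * A 3 1 < A 0 1 * A 3 4)
    (h₁ : A 1 5 * A 4 2 < A 1 2 * A 4 5) :
    Finset.card {l | B 2 l * C l 3 ≠ 0 ∨ B 5 l * C l 0 ≠ 0} ≤ 1 := by
  classical
  let L (s : Fin 6) : Finset κ :=
    {l | B s l * C l (s + 1) ≠ 0 ∨ B (s + 3) l * C l (s + 3 + 1) ≠ 0}
  have hfool : ∀ s t : Fin 6, s ≠ t → s ≠ t + 3 → A s (t + 1) = 0 ∨ A t (s + 1) = 0 := by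
    intro s t
    rw [hA, hA]
    revert s t
    decide
  have hdisj (s t : Fin 6) (hst : s ≠ t) (hst' : s ≠ t + 3) : Disjoint (L s) (L t) := by
    have hs : s + 3 ≠ t := by revert s t; decide
    have hs' : s + 3 ≠ t + 3 := by simpa using hst
    have hs'' : s + 3 ≠ t + 3 + 3 := by simpa using hst'
    have hst'' : s ≠ t + 3 + 3 := by revert s t; decide
    refine Finset.disjoint_left.2 fun l hl hl' ↦ ?_
    rcases (Finset.mem_filter.1 hl).2 with hl | hl <;>
      rcases (Finset.mem_filter.1 hl').2 with hl' | hl' <;>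
      exact h.ne_of_covering hl hl' (hfool _ _ ‹_› ‹_›) rfl
  have hL₀ : 1 < (L 0).card := by
    obtain ⟨l, l', hne, hl, hl'⟩ := h.exists_ne_covering_of_mul_lt_mul h₀
    exact Finset.one_lt_card.2 ⟨l, by simpa [L] using hl, l', by simpa [L] using hl', hne⟩
  have hL₁ : 1 < (L 1).card := by
    obtain ⟨l, l', hne, hl, hl'⟩ := h.exists_ne_covering_of_mul_lt_mul h₁
    exact Finset.one_lt_card.2 ⟨l, by simpa [L] using hl, l', by simpa [L] using hl', hne⟩
  have hsum : (L 0).card + (L 1).card + (L 2).card ≤ 5 := by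
    rw [← Finset.card_union_of_disjoint (hdisj 0 1 (by decide) (by decide)),
      ← Finset.card_union_of_disjoint (Finset.disjoint_union_left.2
        ⟨hdisj 0 2 (by decide) (by decide), hdisj 1 2 (by decide) (by decide)⟩)]
    exact (Finset.card_le_univ _).trans hκ
  change (L 2).card ≤ 1
  lia

theorem exists_covering_two_three_and_five_zero (h : IsNonnegFactorization A B C)
    (hA : IsPolygonPattern A) (hκ : Fintype.card κ ≤ 5) (h₀ : A 0 4 * A 3 1 < A 0 1 * A 3 4)
    (h₁ : A 1 5 * A 4 2 < A 1 2 * A 4 5) :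
    ∃ y, (B 2 y * C y 3 ≠ 0 ∧ B 5 y * C y 0 ≠ 0) ∧
      ∀ l ≠ y, B 2 l * C l 3 = 0 ∧ B 5 l * C l 0 = 0 := by
  classical
  have hunique {l l' : κ} (hl : B 2 l * C l 3 ≠ 0 ∨ B 5 l * C l 0 ≠ 0)
      (hl' : B 2 l' * C l' 3 ≠ 0 ∨ B 5 l' * C l' 0 ≠ 0) : l = l' :=
    Finset.card_le_one.1 (h.card_covering_two_three_le_one hA hκ h₀ h₁) l
      (by simpa using hl) l' (by simpa using hl')
  obtain ⟨y, hy⟩ := h.exists_covering (i := 2) (j := 3) (by rw [Ne, hA]; decide)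
  obtain ⟨y', hy'⟩ := h.exists_covering (i := 5) (j := 0) (by rw [Ne, hA]; decide)
  obtain rfl := hunique (.inl hy) (.inr hy')
  refine ⟨y, ⟨hy, hy'⟩, fun l hne ↦ ?_⟩
  by_contra! hl
  exact hne (hunique (or_iff_not_imp_left.2 fun h0 ↦ hl (not_not.1 h0)) (.inl hy))

theorem mul_eq_zero_of_covering_two_three_of_five_zero (h : IsNonnegFactorization A B C)
    (hA : IsPolygonPattern A) {y : κ} (hy : B 2 y * C y 3 ≠ 0) (hy' : B 5 y * C y 0 ≠ 0)
    {i j : Fin 6} (hij : ¬((i = 2 ∨ i = 5) ∧ (j = 0 ∨ j = 3))) : B i y * C y j = 0 := by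
  by_cases hi : i = 2 ∨ i = 5
  · have hzero : A 2 j = 0 ∨ A 5 j = 0 := by
      rw [hA, hA]
      revert i j
      decide
    rw [hzero.elim (h.right_eq_zero (left_ne_zero_of_mul hy))
      (h.right_eq_zero (left_ne_zero_of_mul hy')), mul_zero]
  · have hzero : A i 3 = 0 ∨ A i 0 = 0 := by
      rw [hA, hA]
      clear hij
      revert i
      decide
    rw [hzero.elim (h.left_eq_zero (right_ne_zero_of_mul hy))
      (h.left_eq_zero (right_ne_zero_of_mul hy')), zero_mul]

theorem six_le_card_of_isPolygonPattern (h : IsNonnegFactorization A B C)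
    (hA : IsPolygonPattern A) (h₀ : A 0 4 * A 3 1 < A 0 1 * A 3 4)
    (h₁ : A 1 5 * A 4 2 < A 1 2 * A 4 5)
    (hne : A 1 4 * A 0 3 * A 2 5 ≠ A 1 3 * A 0 4 * A 2 5 + A 1 5 * A 2 4 * A 0 3) :
    6 ≤ Fintype.card κ := by
  classical
  by_contra! hκ
  obtain ⟨y, ⟨hy, hy'⟩, honly⟩ :=
    h.exists_covering_two_three_and_five_zero hA (Nat.le_of_lt_succ hκ) h₀ h₁
  obtain ⟨A', B', C', h', hadd, hzero⟩ := h.exists_erase_term y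
  have heq (i j : Fin 6) (hij : ¬((i = 2 ∨ i = 5) ∧ (j = 0 ∨ j = 3))) : A i j = A' i j := by
    rw [hadd, h.mul_eq_zero_of_covering_two_three_of_five_zero hA hy hy' hij, zero_add]
  have hA' : IsCutHexagonPattern A' :=
    { apply_self j := by rw [← heq _ _ (by revert j; decide), hA]; exact .inl rfl
      apply_succ j := by rw [← heq _ _ (by revert j; decide), hA]; exact .inr rfl
      apply_two_three := hzero 2 3 fun l hl ↦ (honly l hl).1
      apply_five_zero := hzero 5 0 fun l hl ↦ (honly l hl).2
      apply_ne_zero i j hij := by rw [← heq i j (by tauto), Ne, hA]; tauto }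
  have hcard : Fintype.card {l // l ≠ y} ≤ 4 := by
    rw [Fintype.card_subtype_compl, Fintype.card_subtype_eq]
    lia
  have hident := h'.cutHexagon_identity hA' hcard
  rw [← heq 1 4 (by decide), ← heq 0 3 (by decide), ← heq 2 5 (by decide), ← heq 1 3 (by decide),
    ← heq 0 4 (by decide), ← heq 1 5 (by decide), ← heq 2 4 (by decide)] at hident
  exact hne hident

end IsNonnegFactorization

/-- Twice the area of the triangle formed by the vertex `i` and the edge from the vertex `j` to the
vertex `j + 1` of the polygon with vertices `(x i, y i)`, positive if the triangle is oriented
counterclockwise. Up to scaling the columns this is the slack matrix of a convex polygon. -/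
def slackMatrix [CommRing R] {k : ℕ} [NeZero k] (x y : Fin k → R) : Matrix (Fin k) (Fin k) R :=
  of fun i j ↦ (x (j + 1) - x j) * (y i - y j) - (y (j + 1) - y j) * (x i - x j)

theorem rank_slackMatrix_le [CommRing R] [StrongRankCondition R] {k : ℕ} [NeZero k]
    (x y : Fin k → R) : (slackMatrix x y).rank ≤ 3 := by
  let V : Matrix (Fin k) (Fin 3) R := of fun i ↦ ![1, x i, y i]
  let E : Matrix (Fin 3) (Fin k) R := of ![fun j ↦ x j * y (j + 1) - x (j + 1) * y j,
    fun j ↦ y j - y (j + 1), fun j ↦ x (j + 1) - x j]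
  have hVE : slackMatrix x y = V * E := by
    ext i j
    simp only [slackMatrix, V, E, of_apply, mul_apply, Fin.sum_univ_three, cons_val]
    ring
  calc (slackMatrix x y).rank = (V * E).rank := by rw [hVE]
    _ ≤ V.rank := rank_mul_le_left V E
    _ ≤ 3 := V.rank_le_width

/-- The points `(x i, y i)` are the vertices of a strictly convex polygon in counterclockwise order:
apart from its end points, all vertices lie strictly to the left of each edge. -/
def IsConvexPolygon [CommRing R] [LT R] {k : ℕ} [NeZero k] (x y : Fin k → R) : Prop :=
  ∀ i j, i ≠ j → i ≠ j + 1 → 0 < slackMatrix x y i j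

namespace IsConvexPolygon

variable [CommRing R] [PartialOrder R] {k : ℕ} [NeZero k] {x y : Fin k → R}

theorem isPolygonPattern (h : IsConvexPolygon x y) : IsPolygonPattern (slackMatrix x y) := by
  refine fun i j ↦ ⟨fun hzero ↦ ?_, ?_⟩
  · by_contra! hij
    exact (h i j hij.1 hij.2).ne' hzero
  · rintro (rfl | rfl) <;> simp [slackMatrix, mul_comm]

theorem slackMatrix_nonneg (h : IsConvexPolygon x y) (i j : Fin k) : 0 ≤ slackMatrix x y i j := by
  by_cases hij : i = j ∨ i = j + 1
  · exact ((h.isPolygonPattern i j).2 hij).ge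
  · exact (h i j (fun hi ↦ hij (.inl hi)) (fun hi ↦ hij (.inr hi))).le

end IsConvexPolygon

theorem IsConvexPolygon.rank_slackMatrix [CommRing R] [IsDomain R] [PartialOrder R] {k : ℕ}
    {x y : Fin (k + 3) → R} (h : IsConvexPolygon x y) : (slackMatrix x y).rank = 3 :=
  (rank_slackMatrix_le x y).antisymm h.isPolygonPattern.three_le_rank

section LinearOrder

variable (R) [CommRing R] [LinearOrder R] [IsStrictOrderedRing R]

theorem isConvexPolygon_parabola (k : ℕ) :
    IsConvexPolygon (fun i : Fin (k + 1) ↦ (i.val : R)) (fun i ↦ (i.val : R) ^ 2) := by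
  intro i j hij hij'
  rw [slackMatrix, of_apply]
  rcases eq_or_ne j (Fin.last k) with rfl | hj
  · have hi : (0 : R) < i.val := by
      simpa [Fin.pos_iff_ne_zero] using hij'
    have hik : (i.val : R) < k := by
      exact_mod_cast Fin.val_lt_last hij
    have hpos : 0 < (k : R) * i.val * (k - i.val) :=
      mul_pos (mul_pos (hi.trans hik) hi) (sub_pos.2 hik)
    simp only [Fin.last_add_one, Fin.val_zero, Nat.cast_zero, Fin.val_last]
    linear_combination hpos
  · have hsucc : (j + 1).val = j.val + 1 := Fin.val_add_one_of_lt (Fin.lt_last_iff_ne_last.2 hj)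
    have hpos : (0 : R) < (i.val - j.val) * (i.val - (j + 1).val) := by
      rcases (Fin.val_ne_of_ne hij).lt_or_gt with hlt | hgt
      · have hlt' : i.val < (j + 1).val := by lia
        exact mul_pos_of_neg_of_neg (sub_neg.2 (Nat.cast_lt.2 hlt)) (sub_neg.2 (Nat.cast_lt.2 hlt'))
      · have hgt' : (j + 1).val < i.val := by
          have := Fin.val_ne_of_ne hij'
          lia
        exact mul_pos (sub_pos.2 (Nat.cast_lt.2 hgt)) (sub_pos.2 (Nat.cast_lt.2 hgt'))
    rw [hsucc] at hpos ⊢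
    push_cast at hpos ⊢
    linear_combination hpos

theorem isConvexPolygon_hexagon :
    IsConvexPolygon (![1, 3, 1, -1, -3, -1] : Fin 6 → R) ![0, 4, 3, 0, -4, -3] := by
  intro i j
  fin_cases i <;> fin_cases j <;> simp [slackMatrix] <;> norm_num

theorem exists_isConvexPolygon_le_card {k : ℕ} (hk : k ≤ 3) :
    ∃ x y : Fin (k + 3) → R, IsConvexPolygon x y ∧ ∀ (l : ℕ) (B : Matrix (Fin (k + 3)) (Fin l) R)
      (C : Matrix (Fin l) (Fin (k + 3)) R),
        IsNonnegFactorization (slackMatrix x y) B C → k + 3 ≤ l := by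
  rcases hk.lt_or_eq with hk | rfl
  · have hconvex := isConvexPolygon_parabola R (k + 2)
    refine ⟨_, _, hconvex, fun l B C h ↦ ?_⟩
    simpa using h.card_le_of_isFoolingSet (hconvex.isPolygonPattern.isFoolingSet (by lia))
  · have hconvex := isConvexPolygon_hexagon R
    refine ⟨_, _, hconvex, fun l B C h ↦ ?_⟩
    -- Up to powers of `2`, the three conditions are `4 < 9`, `1 < 4` and `60 ≠ 24 + 20`.
    simpa using h.six_le_card_of_isPolygonPattern hconvex.isPolygonPattern
      (by simp [slackMatrix]; norm_num) (by simp [slackMatrix]; norm_num)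
      (by simp [slackMatrix]; norm_num)

theorem exists_rank_three_full_nonneg_rank_general :
    ∀ k ∈ ({3, 4, 5, 6} : Set ℕ),
      ∃ A : Matrix (Fin k) (Fin k) R,
        (∀ i j, 0 ≤ A i j) ∧ A.rank = 3 ∧
        ¬ ∃ (B : Matrix (Fin k) (Fin (k - 1)) R) (C : Matrix (Fin (k - 1)) (Fin k) R),
            (∀ i j, 0 ≤ B i j) ∧ (∀ i j, 0 ≤ C i j) ∧ A = B * C := by
  intro k hk
  obtain ⟨k, rfl, hk_le⟩ : ∃ k', k = k' + 3 ∧ k' ≤ 3 := by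
    simp only [Set.mem_insert_iff, Set.mem_singleton_iff] at hk
    exact ⟨k - 3, by lia⟩
  obtain ⟨x, y, hconvex, hcard⟩ := exists_isConvexPolygon_le_card R hk_le
  refine ⟨slackMatrix x y, hconvex.slackMatrix_nonneg, hconvex.rank_slackMatrix, ?_⟩
  rintro ⟨B, C, hB, hC, hBC⟩
  have : k + 3 ≤ k + 3 - 1 := hcard _ B C ⟨hB, hC, hBC⟩
  lia

end LinearOrder

/-- For each `k ∈ {3,4,5,6}` there is a nonnegative k×k real matrix of
classical rank 3 whose nonnegative rank equals `k`, i.e. it admits no nonnegative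
factorization through `k - 1`. -/
theorem exists_rank_three_full_nonneg_rank :
    ∀ k ∈ ({3, 4, 5, 6} : Set ℕ),
      ∃ A : Matrix (Fin k) (Fin k) ℝ,
        (∀ i j, 0 ≤ A i j) ∧ A.rank = 3 ∧
        ¬ ∃ (B : Matrix (Fin k) (Fin (k - 1)) ℝ) (C : Matrix (Fin (k - 1)) (Fin k) ℝ),
            (∀ i j, 0 ≤ B i j) ∧ (∀ i j, 0 ≤ C i j) ∧ A = B * C :=
  exists_rank_three_full_nonneg_rank_general ℝ
end
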